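/- Let A ⊆ B be a graded extension of positively graded k-algebras, both spanned by the identity in degree zero, with ∂ : B → A an A-linear homogeneous map of degree −2ℓ. Suppose {c_i} and {d_i} are almost dual bases of B over A with respect to ∂. Then there exists a family {d'_i} such that {c_i} and {d'_i} are dual bases (∂(c_i d'_j) = δ_{ij} exactly), and moreover d_i ≡ d'_i modulo the ideal of B generated by m_A. In particular the extension A ⊆ B is graded Frobenius with trace ∂. -/

import Mathlib

open scoped Classical

/-- The family `b : Fin n → Bb` is a basis of `Bb` as a module over the subalgebra `A`:
every element has a unique decomposition with coefficients in `A`. -/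
def IsBasisOverSub {k Bb : Type} [Field k] [CommRing Bb] [Algebra k Bb]
    (A : Subalgebra k Bb) {n : ℕ} (b : Fin n → Bb) : Prop :=
  ∀ f : Bb, ∃! g : Fin n → Bb, (∀ i, g i ∈ A) ∧ f = ∑ i, g i * b i

/-- Membership in `m_A`, the graded Jacobson radical of `A`: the ideal of `A` spanned by
all elements of strictly positive degree. -/
def InGradedMax {k Bb : Type} [Field k] [CommRing Bb] [Algebra k Bb]
    (ℬ : ℕ → Submodule k Bb) (A : Subalgebra k Bb) (f : Bb) : Prop :=
  f ∈ A ∧ f ∈ ⨆ n ∈ Set.Ioi (0 : ℕ), ℬ n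

/-!
Almost duality says that the Gram matrix `∂ (c i * d j)` is the identity modulo `m_A`. If `q i` is
the degree of `d i`, comparing degrees forces `c i` to have degree `2ℓ - q i`, so
`∂ (c i * d j)` has degree `q j - q i`; hence the Gram matrix is *exactly* the identity at all
entries with `q j ≤ q i`. A Gram–Schmidt recursion on the degree of `d j` then clears the remaining
entries. All coefficients used have strictly positive degree, so the correction lies in `m_A B`, and
the recursion preserves degrees because its coefficients are homogeneous of degree `q j - q i`.

Duality makes the corrected family independent, hence a basis, and the symmetry of `∂ (x * y)`
transfers the basis property from it to `c`.
-/

section Biorthogonalize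

variable {R M ι α : Type*} [CommRing R] [AddCommGroup M] [Module R M] [Fintype ι]
  [LinearOrder α] (w : ι → α) (φ : ι → Module.Dual R M) (v : ι → M)

/-- Gram–Schmidt for a family `v` against functionals `φ`: from `v j` one subtracts the components
`φ i (v j)` along the vectors already constructed, those of smaller weight `w i < w j`. Unlike for
inner products, the functionals are not changed. -/
noncomputable def biorthogonalize [WellFoundedLT α] (j : ι) : M :=
  v j - ∑ i : {i // w i < w j}, φ i (v j) • biorthogonalize i
termination_by wellFounded_lt.wrap (w j)
decreasing_by exact i.2

variable [WellFoundedLT α]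

theorem sub_biorthogonalize (j : ι) :
    v j - biorthogonalize w φ v j =
      ∑ i with w i < w j, φ i (v j) • biorthogonalize w φ v i := by
  rw [biorthogonalize, sub_sub_cancel]
  exact (Finset.sum_subtype _ (by simp) fun i ↦ φ i (v j) • biorthogonalize w φ v i).symm

theorem span_le_span_biorthogonalize :
    Submodule.span R (Set.range v) ≤ Submodule.span R (Set.range (biorthogonalize w φ v)) := by
  refine Submodule.span_le.2 (Set.range_subset_iff.2 fun j ↦ ?_)
  rw [← sub_add_cancel (v j) (biorthogonalize w φ v j), sub_biorthogonalize]
  have mem_span (i : ι) : biorthogonalize w φ v i ∈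
      Submodule.span R (Set.range (biorthogonalize w φ v)) :=
    Submodule.subset_span (Set.mem_range_self i)
  exact add_mem (sum_mem fun i _ ↦ Submodule.smul_mem _ _ (mem_span i)) (mem_span j)

variable {w φ v}

theorem apply_biorthogonalize [DecidableEq ι]
    (h : ∀ i j, w j ≤ w i → φ i (v j) = if i = j then 1 else 0) (i j : ι) :
    φ i (biorthogonalize w φ v j) = if i = j then 1 else 0 := by
  induction hj : w j using WellFoundedLT.induction generalizing j with
  | _ a ih =>
    subst hj
    have correction : φ i (v j - biorthogonalize w φ v j) = if w i < w j then φ i (v j) else 0 := by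
      calc φ i (v j - biorthogonalize w φ v j)
          = ∑ m with w m < w j, φ m (v j) * φ i (biorthogonalize w φ v m) := by
            simp only [sub_biorthogonalize, map_sum, map_smul, smul_eq_mul]
        _ = ∑ m with w m < w j, if i = m then φ m (v j) else 0 :=
            Finset.sum_congr rfl fun m hm ↦ by
              rw [ih _ (Finset.mem_filter.1 hm).2 m rfl, mul_ite, mul_one, mul_zero]
        _ = if w i < w j then φ i (v j) else 0 := by simp
    rw [map_sub, sub_eq_iff_eq_add] at correction
    split_ifs at correction with hij
    · have hne : i ≠ j := fun e ↦ hij.ne (congrArg w e)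
      simpa [hne] using correction
    · rw [← h i j (not_lt.1 hij), correction, zero_add]

end Biorthogonalize

section DualBases

open Module

variable {R M ι : Type*} [CommRing R] [AddCommGroup M] [Module R M]

theorem dualBases_of_span_eq_top [Finite ι] [DecidableEq ι] {v : ι → M} {φ : ι → Dual R M}
    (h : ∀ i j, φ i (v j) = if i = j then 1 else 0) (hv : Submodule.span R (Set.range v) = ⊤) :
    DualBases v φ where
  eval_same i := by simp [h]
  eval_of_ne i j hij := by simp [h, hij]
  total {x y} hxy := by
    have independent : LinearIndependent R v :=
      .of_pairwise_dual_eq_zero_one v φ (fun i j hij ↦ by simp [h, hij]) (by simp [h])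
    let b := Basis.mk independent hv.ge
    have coord (i : ι) : φ i = b.coord i :=
      b.ext fun j ↦ by rw [b.coord_apply, b.repr_self_apply, Basis.mk_apply, h]; simp only [eq_comm]
    exact b.ext_elem fun i ↦ by simpa only [coord, b.coord_apply] using hxy i

theorem dualBases_symm [Finite ι] {F : LinearMap.BilinForm R M} (hF : F.IsSymm) {v w : ι → M}
    (h : DualBases w fun i ↦ F (v i)) : DualBases v fun i ↦ F (w i) where
  eval_same i := (hF.eq _ _).trans (h.eval_same i)
  eval_of_ne i j hij := (hF.eq _ _).trans (h.eval_of_ne hij.symm)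
  total {x y} hxy := by
    have separates : F x = F y := h.basis.ext fun i ↦ by
      simpa only [h.coe_basis, hF.eq] using hxy i
    exact h.total fun i ↦ by rw [hF.eq, separates, hF.eq]

end DualBases

section FrobeniusForm

variable {A B : Type*} [CommRing A] [CommRing B] [Algebra A B]

/-- The bilinear form `(x, y) ↦ ∂ (x * y)` attached to a trace `∂ : B → A`. Families `c` and `d` are
dual bases with respect to `∂` when `d` and the functionals `frobeniusForm ∂ (c i)` satisfy
`Module.DualBases`. -/
def frobeniusForm (tr : B →ₗ[A] A) : LinearMap.BilinForm A B := (LinearMap.mul A B).compr₂ tr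

@[simp]
theorem frobeniusForm_apply (tr : B →ₗ[A] A) (x y : B) : frobeniusForm tr x y = tr (x * y) := rfl

theorem frobeniusForm_isSymm (tr : B →ₗ[A] A) : (frobeniusForm tr).IsSymm :=
  ⟨fun x y ↦ by simp [mul_comm]⟩

theorem trace_mul_eq_ite_of_dualBases {ι : Type*} [DecidableEq ι] {tr : B →ₗ[A] A} {c d : ι → B}
    (h : Module.DualBases d fun i ↦ frobeniusForm tr (c i)) (i j : ι) :
    tr (c i * d j) = if i = j then 1 else 0 := by
  split_ifs with hij
  · exact hij ▸ h.eval_same i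
  · exact h.eval_of_ne hij

end FrobeniusForm

section Graded

variable {R B : Type*} [CommRing R] [CommRing B] [Algebra R B] (ℬ : ℕ → Submodule R B)

/-- Homogeneity of degree `-e` for a map `∂ : B → A` into a subalgebra: it maps degree `m + e` to
degree `m`, and kills the degrees below `e`. -/
structure LowersDegree {A : Subalgebra R B} (tr : B →ₗ[A] A) (e : ℕ) : Prop where
  coe_mem : ∀ m, ∀ b ∈ ℬ (m + e), (tr b : B) ∈ ℬ m
  eq_zero_of_lt : ∀ m, ∀ b ∈ ℬ m, m < e → tr b = 0

/-- An endomorphism of `B` that is `A`-linear and takes values in the subalgebra `A`, as an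
`A`-linear map `B → A`. -/
def toSubalgebraLinearMap {A : Subalgebra R B} (D : B →ₗ[R] B) (mem : ∀ b, D b ∈ A)
    (map_mul : ∀ a ∈ A, ∀ b, D (a * b) = a * D b) : B →ₗ[A] A where
  toFun b := ⟨D b, mem b⟩
  map_add' x y := Subtype.ext (map_add D x y)
  map_smul' a b := Subtype.ext (map_mul a a.2 b)

@[simp]
theorem coe_toSubalgebraLinearMap_apply {A : Subalgebra R B} {D : B →ₗ[R] B} (mem : ∀ b, D b ∈ A)
    (map_mul : ∀ a ∈ A, ∀ b, D (a * b) = a * D b) (b : B) :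
    (toSubalgebraLinearMap D mem map_mul b : B) = D b := rfl

theorem biorthogonalize_mem [SetLike.GradedMonoid ℬ] {A : Subalgebra R B} {ι : Type*} [Fintype ι]
    {q : ι → ℕ} {φ : ι → Module.Dual A B} {v : ι → B} (hv : ∀ j, v j ∈ ℬ (q j))
    (hφ : ∀ i j, q i < q j → (φ i (v j) : B) ∈ ℬ (q j - q i)) (j : ι) :
    biorthogonalize q φ v j ∈ ℬ (q j) := by
  induction hj : q j using Nat.strong_induction_on generalizing j with
  | _ m ih =>
    subst hj
    rw [← sub_sub_self (v j) (biorthogonalize q φ v j), sub_biorthogonalize]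
    refine sub_mem (hv j) (sum_mem fun i hi ↦ ?_)
    have lt : q i < q j := (Finset.mem_filter.1 hi).2
    have product := SetLike.mul_mem_graded (hφ i j lt) (ih _ lt i rfl)
    rwa [Nat.sub_add_cancel lt.le] at product

variable [GradedAlgebra ℬ]

/-- The ideal `m_A` of a subalgebra `A` of a graded algebra: the elements of `A` whose component of
degree zero vanishes. -/
def positiveIdeal (A : Subalgebra R B) : Ideal A :=
  (HomogeneousIdeal.irrelevant ℬ).toIdeal.comap (algebraMap A B)

variable {ℬ} {A : Subalgebra R B}

theorem mem_positiveIdeal {a : A} :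
    a ∈ positiveIdeal ℬ A ↔ (a : B) ∈ HomogeneousIdeal.irrelevant ℬ := Iff.rfl

theorem eq_zero_of_mem_irrelevant {b : B} (hb : b ∈ HomogeneousIdeal.irrelevant ℬ)
    (hb₀ : b ∈ ℬ 0) : b = 0 := by
  rwa [HomogeneousIdeal.mem_irrelevant_iff, GradedRing.proj_apply,
    DirectSum.decompose_of_mem_same ℬ hb₀] at hb

theorem mem_iSup_pos_iff_mem_irrelevant {b : B} :
    b ∈ ⨆ n ∈ Set.Ioi (0 : ℕ), ℬ n ↔ b ∈ HomogeneousIdeal.irrelevant ℬ := by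
  change b ∈ (⨆ n > 0, ℬ n).toAddSubmonoid ↔ b ∈ (HomogeneousIdeal.irrelevant ℬ).toAddSubmonoid
  rw [HomogeneousIdeal.irrelevant_eq_iSup]
  simp only [Submodule.iSup_toAddSubmonoid]
  rfl

namespace LowersDegree

variable {tr : B →ₗ[A] A} {e : ℕ}

theorem mem_positiveIdeal_of_ne (h : LowersDegree ℬ tr e) {m : ℕ} {b : B} (hb : b ∈ ℬ m)
    (hm : m ≠ e) : tr b ∈ positiveIdeal ℬ A := by
  rcases hm.lt_or_gt with lt | gt
  · rw [h.eq_zero_of_lt m b hb lt]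
    exact zero_mem _
  · refine HomogeneousIdeal.mem_irrelevant_of_mem ℬ (Nat.sub_pos_of_lt gt) (h.coe_mem _ b ?_)
    rwa [Nat.sub_add_cancel gt.le]

theorem eq_of_sub_mem_positiveIdeal (h : LowersDegree ℬ tr e) {m : ℕ} {b : B} (hb : b ∈ ℬ m)
    (hm : m ≤ e) {a : A} (ha : (a : B) ∈ ℬ 0) (hab : tr b - a ∈ positiveIdeal ℬ A) :
    tr b = a := by
  have tr_mem : (tr b : B) ∈ ℬ 0 := by
    rcases hm.lt_or_eq with lt | rfl
    · simp [h.eq_zero_of_lt m b hb lt]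
    · exact h.coe_mem 0 b (by rwa [zero_add])
  exact sub_eq_zero.1 (Subtype.ext (eq_zero_of_mem_irrelevant hab (sub_mem tr_mem ha)))

theorem exists_add_eq_of_sub_one_mem (h : LowersDegree ℬ tr e) {x y : B}
    (hx : SetLike.IsHomogeneousElem ℬ x) (hy : SetLike.IsHomogeneousElem ℬ y)
    (hxy : tr (x * y) - 1 ∈ positiveIdeal ℬ A) : ∃ p q, p + q = e ∧ x ∈ ℬ p ∧ y ∈ ℬ q := by
  obtain ⟨p, hp⟩ := hx
  obtain ⟨q, hq⟩ := hy
  by_cases hpq : p + q = e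
  · exact ⟨p, q, hpq, hp, hq⟩
  · have one_mem : (1 : A) ∈ positiveIdeal ℬ A :=
      (Submodule.sub_mem_iff_right _
        (h.mem_positiveIdeal_of_ne (SetLike.mul_mem_graded hp hq) hpq)).1 hxy
    have one_eq_zero : (1 : B) = 0 :=
      eq_zero_of_mem_irrelevant (mem_positiveIdeal.1 one_mem) SetLike.GradedOne.one_mem
    have := subsingleton_of_zero_eq_one one_eq_zero.symm
    exact ⟨e, 0, add_zero e, by simp [Subsingleton.elim x 0], by simp [Subsingleton.elim y 0]⟩

end LowersDegree

end Graded

section BasisOverSub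

variable {k Bb : Type} [Field k] [CommRing Bb] [Algebra k Bb]

namespace IsBasisOverSub

variable {A : Subalgebra k Bb} {n : ℕ}

theorem span_eq_top {b : Fin n → Bb} (hb : IsBasisOverSub A b) :
    Submodule.span A (Set.range b) = ⊤ := by
  refine Submodule.eq_top_iff'.2 fun f ↦ ?_
  obtain ⟨g, ⟨hg, rfl⟩, -⟩ := hb f
  exact sum_mem fun i _ ↦ Submodule.smul_mem _ (⟨g i, hg i⟩ : A)
    (Submodule.subset_span (Set.mem_range_self i))

theorem of_dualBases {b : Fin n → Bb} {φ : Fin n → Module.Dual A Bb}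
    (h : Module.DualBases b φ) : IsBasisOverSub A b := by
  rw [← h.coe_basis]
  refine fun f ↦
    ⟨fun i ↦ h.basis.repr f i, ⟨fun i ↦ (h.basis.repr f i).2, (h.basis.sum_repr f).symm⟩, ?_⟩
  rintro g ⟨hg, rfl⟩
  have repr_sum := h.basis.repr_sum_self fun i ↦ ⟨g i, hg i⟩
  exact funext fun i ↦ (congrArg Subtype.val (congrFun repr_sum i)).symm

end IsBasisOverSub

variable {ℬ : ℕ → Submodule k Bb} [GradedAlgebra ℬ] {A : Subalgebra k Bb}

theorem inGradedMax_coe_iff {a : A} : InGradedMax ℬ A a ↔ a ∈ positiveIdeal ℬ A := by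
  rw [InGradedMax, mem_iSup_pos_iff_mem_irrelevant, mem_positiveIdeal, and_iff_right a.2]

theorem map_positiveIdeal :
    (positiveIdeal ℬ A).map (algebraMap A Bb) = Ideal.span {b | InGradedMax ℬ A b} := by
  refine congrArg Ideal.span (Set.ext fun b ↦ ⟨?_, fun hb ↦ ?_⟩)
  · rintro ⟨a, ha, rfl⟩
    exact inGradedMax_coe_iff.2 ha
  · exact ⟨⟨b, hb.1⟩, inGradedMax_coe_iff.1 hb, rfl⟩

end BasisOverSub

theorem stmt12_general {R B ι : Type*} [CommRing R] [CommRing B] [Algebra R B]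
    [Finite ι] [DecidableEq ι] {ℬ : ℕ → Submodule R B} [GradedAlgebra ℬ] {A : Subalgebra R B}
    {tr : B →ₗ[A] A} {e : ℕ} (htr : LowersDegree ℬ tr e) {c d : ι → B}
    (hc : ∀ i, SetLike.IsHomogeneousElem ℬ (c i)) (hd : ∀ i, SetLike.IsHomogeneousElem ℬ (d i))
    (hspan : Submodule.span A (Set.range d) = ⊤)
    (hcd : ∀ i j, tr (c i * d j) - (if i = j then 1 else 0) ∈ positiveIdeal ℬ A) :
    ∃ d' : ι → B,
      (∀ i, SetLike.IsHomogeneousElem ℬ (d' i)) ∧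
      Module.DualBases c (fun i ↦ frobeniusForm tr (d' i)) ∧
      Module.DualBases d' (fun i ↦ frobeniusForm tr (c i)) ∧
      (∀ i, d i - d' i ∈ (positiveIdeal ℬ A).map (algebraMap A B)) := by
  cases nonempty_fintype ι
  have degrees (i : ι) : ∃ p q, p + q = e ∧ c i ∈ ℬ p ∧ d i ∈ ℬ q :=
    htr.exists_add_eq_of_sub_one_mem (hc i) (hd i) (by simpa using hcd i i)
  choose p q hpq hp hq using degrees
  have mul_mem (i j : ι) : c i * d j ∈ ℬ (p i + q j) := SetLike.mul_mem_graded (hp i) (hq j)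
  have triangular (i j : ι) (hji : q j ≤ q i) : tr (c i * d j) = if i = j then 1 else 0 := by
    refine htr.eq_of_sub_mem_positiveIdeal (mul_mem i j) (by have := hpq i; lia) ?_ (hcd i j)
    split_ifs
    exacts [SetLike.GradedOne.one_mem, zero_mem _]
  have tr_mem (i j : ι) (hij : q i < q j) : (tr (c i * d j) : B) ∈ ℬ (q j - q i) :=
    htr.coe_mem _ _ ((show p i + q j = q j - q i + e by have := hpq i; lia) ▸ mul_mem i j)
  let φ (i : ι) := frobeniusForm tr (c i)
  let d' := biorthogonalize q φ d
  have dual : Module.DualBases d' φ :=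
    dualBases_of_span_eq_top (apply_biorthogonalize triangular)
      (top_le_iff.1 (hspan.ge.trans (span_le_span_biorthogonalize q φ d)))
  refine ⟨d', fun j ↦ ⟨q j, biorthogonalize_mem ℬ hq tr_mem j⟩,
    dualBases_symm (frobeniusForm_isSymm tr) dual, dual, fun j ↦ ?_⟩
  rw [sub_biorthogonalize]
  refine sum_mem fun i hi ↦ Ideal.mul_mem_right _ _ (Ideal.mem_map_of_mem _ ?_)
  exact HomogeneousIdeal.mem_irrelevant_of_mem ℬ (Nat.sub_pos_of_lt (Finset.mem_filter.1 hi).2)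
    (tr_mem i j (Finset.mem_filter.1 hi).2)

/-- Let `A ⊆ B` be a graded extension of positively graded `k`-algebras,
both spanned by the identity in degree zero, and `∂ : B → A` an `A`-linear map homogeneous
of degree `−2ℓ`. If `{c_i}` and `{d_i}` are almost dual bases of `B` over `A` with respect
to `∂`, then there is a family `{d'_i}` such that `{c_i}` and `{d'_i}` are dual bases
(`∂(c_i d'_j) = δ_{ij}` exactly), with `d_i ≡ d'_i` modulo the ideal of `B` generated by
`m_A`. In particular `A ⊆ B` is a graded Frobenius extension with trace `∂`. -/
theorem stmt12 {k Bb : Type} [Field k] [CommRing Bb] [Algebra k Bb]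
    (ℬ : ℕ → Submodule k Bb) [GradedAlgebra ℬ]
    (hB0 : ℬ 0 = Submodule.span k {(1 : Bb)})
    (A : Subalgebra k Bb)
    (hAgraded : ∀ f ∈ A, ∀ m : ℕ, (DirectSum.decompose ℬ f m : Bb) ∈ A)
    (l : ℕ) (D : Bb →ₗ[k] Bb)
    (hDA : ∀ b : Bb, D b ∈ A)
    (hDlin : ∀ a ∈ A, ∀ b : Bb, D (a * b) = a * D b)
    (hDdeg : ∀ (m : ℕ) (b : Bb), b ∈ ℬ (m + 2 * l) → D b ∈ ℬ m)
    (hDlow : ∀ (m : ℕ) (b : Bb), b ∈ ℬ m → m < 2 * l → D b = 0)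
    (n : ℕ) (c d : Fin n → Bb)
    (hc : ∀ i, ∃ m, c i ∈ ℬ m) (hd : ∀ i, ∃ m, d i ∈ ℬ m)
    (hcbasis : IsBasisOverSub A c) (hdbasis : IsBasisOverSub A d)
    (hpair : ∀ i j, InGradedMax ℬ A (D (c i * d j) - (if i = j then 1 else 0))) :
    ∃ d' : Fin n → Bb,
      (∀ i, ∃ m, d' i ∈ ℬ m) ∧
      IsBasisOverSub A d' ∧
      (∀ i j, D (c i * d' j) = if i = j then 1 else 0) ∧
      (∀ i, d i - d' i ∈ Ideal.span {b : Bb | InGradedMax ℬ A b}) := by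
  obtain ⟨d', hhom, -, hdual, hcong⟩ := stmt12_general (tr := toSubalgebraLinearMap D hDA hDlin)
    ⟨hDdeg, fun m b hb hm ↦ Subtype.ext (hDlow m b hb hm)⟩ hc hd hdbasis.span_eq_top
    fun i j ↦ inGradedMax_coe_iff.1 (by simpa [apply_ite] using hpair i j)
  exact ⟨d', hhom, .of_dualBases hdual,
    fun i j ↦ by
      simpa [apply_ite] using congrArg Subtype.val (trace_mul_eq_ite_of_dualBases hdual i j),
    fun i ↦ map_positiveIdeal (ℬ := ℬ) ▸ hcong i⟩
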